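/- arXiv:1608.02139 — 2 statements merged into one kernel-verified Lean document; each statement's English description precedes it below -/
import Mathlib

section
/- Let σ > 0, let T > 0, and let s : ℝ → ℝ be twice continuously differentiable on [0,T) with s(0) = 0, s'(0) = σ, and s''(t) = 2 s(t)³ + t s(t) for all t ∈ [0,T). Then for every t with 0 < t < T one has t > ∫₀^{s(t)} du / √(u⁴ + σ² + 2u³/(3σ)). -/
open Set MeasureTheory intervalIntegral Real

/-!
Since `s'' = (2 s² + t) s` with a nonnegative coefficient, `s s'` and then `s'²` are nondecreasing,
so `s'` never vanishes and stays positive. Hence `s` and `s''` are positive, so `s' > σ` and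
`s > σ t`. Replacing `t` by the larger `s / σ` gives the autonomous bound `s'' < 2 s³ + s² / σ`;
multiplying by `2 s'` and integrating yields `s'² < s⁴ + σ² + 2 s³ / (3 σ)`. Taking square roots,
dividing by the right-hand side and substituting `u = s t` bounds the elapsed time.
-/

section Calculus

variable {D : Set ℝ} {f f' : ℝ → ℝ}

lemma monotoneOn_of_hasDerivWithinAt_of_interior_nonneg (hD : Convex ℝ D)
    (hf : ∀ t ∈ D, HasDerivWithinAt f (f' t) D t) (hf' : ∀ t ∈ interior D, 0 ≤ f' t) :
    MonotoneOn f D :=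
  monotoneOn_of_hasDerivWithinAt_nonneg hD (fun t ht ↦ (hf t ht).continuousWithinAt)
    (fun t ht ↦ (hf t (interior_subset ht)).mono interior_subset) hf'

lemma strictMonoOn_of_hasDerivWithinAt_of_interior_pos (hD : Convex ℝ D)
    (hf : ∀ t ∈ D, HasDerivWithinAt f (f' t) D t) (hf' : ∀ t ∈ interior D, 0 < f' t) :
    StrictMonoOn f D :=
  strictMonoOn_of_hasDerivWithinAt_pos hD (fun t ht ↦ (hf t ht).continuousWithinAt)
    (fun t ht ↦ (hf t (interior_subset ht)).mono interior_subset) hf'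

lemma integral_one_div_lt_sub_of_deriv_lt {a b : ℝ} {v : ℝ → ℝ} (hab : a < b)
    (hf : ∀ t ∈ Icc a b, HasDerivWithinAt f (f' t) (Icc a b) t) (hf' : ContinuousOn f' (Icc a b))
    (hv : ContinuousOn v (f '' Icc a b)) (hv_pos : ∀ t ∈ Icc a b, 0 < v (f t))
    (hlt : ∀ t ∈ Ioc a b, f' t < v (f t)) :
    ∫ u in f a..f b, 1 / v u < b - a := by
  have f_cont : ContinuousOn f (Icc a b) := fun t ht ↦ (hf t ht).continuousWithinAt
  have inv_cont : ContinuousOn (fun u ↦ 1 / v u) (f '' Icc a b) :=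
    continuousOn_const.div hv (forall_mem_image.2 fun t ht ↦ (hv_pos t ht).ne')
  have speed_lt_one : ∀ t ∈ Ioc a b, 1 / v (f t) * f' t < 1 := fun t ht ↦ by
    rw [one_div_mul_eq_div, div_lt_one (hv_pos t (Ioc_subset_Icc_self ht))]
    exact hlt t ht
  calc ∫ u in f a..f b, 1 / v u
      = ∫ t in a..b, 1 / v (f t) * f' t := by
        refine (integral_comp_mul_deriv'' (g := fun u ↦ 1 / v u) ?_ (fun t ht ↦ ?_) ?_ ?_).symm
        · rwa [uIcc_of_le hab.le]
        · rw [min_eq_left hab.le, max_eq_right hab.le] at ht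
          exact ((hf t (Ioo_subset_Icc_self ht)).hasDerivAt
            (Icc_mem_nhds ht.1 ht.2)).hasDerivWithinAt
        · rwa [uIcc_of_le hab.le]
        · rwa [uIcc_of_le hab.le]
    _ < ∫ _ in a..b, (1 : ℝ) :=
        integral_lt_integral_of_continuousOn_of_le_of_exists_lt hab
          ((inv_cont.comp f_cont (mapsTo_image f _)).mul hf') continuousOn_const
          (fun t ht ↦ (speed_lt_one t ht).le)
          ⟨b, right_mem_Icc.2 hab.le, speed_lt_one b (right_mem_Ioc.2 hab)⟩
    _ = b - a := by simp

end Calculus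

section SecondOrder

variable {D : Set ℝ} {s s' s'' : ℝ → ℝ}

lemma deriv_pos_of_deriv2_eq_nonneg_mul {a : ℝ} {q : ℝ → ℝ} (hD : Convex ℝ D) (ha : IsLeast D a)
    (hs : ∀ t ∈ D, HasDerivWithinAt s (s' t) D t)
    (hs' : ∀ t ∈ D, HasDerivWithinAt s' (q t * s t) D t) (hq : ∀ t ∈ interior D, 0 ≤ q t)
    (hsa : 0 ≤ s a) (hs'a : 0 < s' a) : ∀ t ∈ D, 0 < s' t := by
  have mul_mono : MonotoneOn (fun t ↦ s t * s' t) D :=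
    monotoneOn_of_hasDerivWithinAt_of_interior_nonneg hD
      (fun t ht ↦ (hs t ht).fun_mul (hs' t ht)) fun t ht ↦ by
        nlinarith [mul_nonneg (hq t ht) (sq_nonneg (s t)), sq_nonneg (s' t)]
  have mul_nonneg_of_mem : ∀ t ∈ D, 0 ≤ s t * s' t := fun t ht ↦
    (mul_nonneg hsa hs'a.le).trans (mul_mono ha.1 ht (ha.2 ht))
  have sq_mono : MonotoneOn (fun t ↦ s' t ^ 2) D :=
    monotoneOn_of_hasDerivWithinAt_of_interior_nonneg hD
      (fun t ht ↦ (hs' t ht).fun_pow 2) fun t ht ↦ by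
        have := mul_nonneg (hq t ht) (mul_nonneg_of_mem t (interior_subset ht))
        linear_combination 2 * this
  intro t ht
  by_contra! hneg
  have s'_cont : ContinuousOn s' D := fun t ht ↦ (hs' t ht).continuousWithinAt
  obtain ⟨c, hc, hc0⟩ : (0 : ℝ) ∈ s' '' D :=
    hD.isPreconnected.intermediate_value ht ha.1 s'_cont ⟨hneg, hs'a.le⟩
  have sq_le : s' a ^ 2 ≤ s' c ^ 2 := sq_mono ha.1 hc (ha.2 hc)
  rw [hc0] at sq_le
  linarith [pow_pos hs'a 2]

lemma strictMonoOn_potential_sub_kinetic {F V : ℝ → ℝ} (hD : Convex ℝ D)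
    (hs : ∀ t ∈ D, HasDerivWithinAt s (s' t) D t)
    (hs' : ∀ t ∈ D, HasDerivWithinAt s' (s'' t) D t)
    (hV : ∀ t ∈ D, HasDerivAt V (F (s t)) (s t))
    (hpos : ∀ t ∈ interior D, 0 < s' t) (hlt : ∀ t ∈ interior D, s'' t < F (s t)) :
    StrictMonoOn (fun t ↦ V (s t) - s' t ^ 2 / 2) D :=
  strictMonoOn_of_hasDerivWithinAt_of_interior_pos hD
    (fun t ht ↦ ((hV t ht).comp_hasDerivWithinAt t (hs t ht)).fun_sub
      (((hs' t ht).fun_pow 2).div_const 2)) fun t ht ↦ by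
        have := mul_pos (hpos t ht) (sub_pos.2 (hlt t ht))
        linear_combination this

end SecondOrder

/-- A solution `s` on `[0, T)`, with derivative `s'`, of the homogeneous second Painlevé equation
`s'' = 2 s³ + t s` with initial data `s 0 = 0` and `s' 0 = σ`. Derivatives are taken within
`[0, T)`, so they are one-sided at `0`. -/
structure IsPainleveIISolution (σ T : ℝ) (s s' : ℝ → ℝ) : Prop where
  hasDerivWithinAt : ∀ t ∈ Ico 0 T, HasDerivWithinAt s (s' t) (Ico 0 T) t
  hasDerivWithinAt_deriv : ∀ t ∈ Ico 0 T,
    HasDerivWithinAt s' (2 * s t ^ 3 + t * s t) (Ico 0 T) t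
  apply_zero : s 0 = 0
  deriv_zero : s' 0 = σ

namespace IsPainleveIISolution

variable {σ T t : ℝ} {s s' : ℝ → ℝ}

lemma deriv_pos (h : IsPainleveIISolution σ T s s') (hσ : 0 < σ) (ht : t ∈ Ico 0 T) :
    0 < s' t := by
  have hT : 0 < T := ht.1.trans_lt ht.2
  refine deriv_pos_of_deriv2_eq_nonneg_mul (q := fun t ↦ 2 * s t ^ 2 + t) (convex_Ico 0 T)
    (isLeast_Ico hT) h.hasDerivWithinAt (fun t ht ↦ ?_) (fun t ht ↦ ?_) h.apply_zero.ge
    (h.deriv_zero ▸ hσ) t ht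
  · exact (h.hasDerivWithinAt_deriv t ht).congr_deriv (by ring)
  · have := (interior_subset ht).1
    positivity

lemma strictMonoOn (h : IsPainleveIISolution σ T s s') (hσ : 0 < σ) :
    StrictMonoOn s (Ico 0 T) :=
  strictMonoOn_of_hasDerivWithinAt_of_interior_pos (convex_Ico 0 T) h.hasDerivWithinAt
    fun _ ht ↦ h.deriv_pos hσ (interior_subset ht)

lemma nonneg (h : IsPainleveIISolution σ T s s') (hσ : 0 < σ) (ht : t ∈ Ico 0 T) : 0 ≤ s t :=
  h.apply_zero ▸ (h.strictMonoOn hσ).monotoneOn (left_mem_Ico.2 (ht.1.trans_lt ht.2)) ht ht.1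

lemma pos (h : IsPainleveIISolution σ T s s') (hσ : 0 < σ) (ht : t ∈ Ioo 0 T) : 0 < s t :=
  h.apply_zero ▸ h.strictMonoOn hσ (left_mem_Ico.2 (ht.1.trans ht.2)) (Ioo_subset_Ico_self ht) ht.1

lemma lt_deriv (h : IsPainleveIISolution σ T s s') (hσ : 0 < σ) (ht : t ∈ Ioo 0 T) :
    σ < s' t := by
  have s'_strictMono : StrictMonoOn s' (Ico 0 T) :=
    strictMonoOn_of_hasDerivWithinAt_of_interior_pos (convex_Ico 0 T) h.hasDerivWithinAt_deriv
      fun t ht ↦ by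
        rw [interior_Ico] at ht
        have := h.pos hσ ht
        have := ht.1
        positivity
  exact h.deriv_zero ▸
    s'_strictMono (left_mem_Ico.2 (ht.1.trans ht.2)) (Ioo_subset_Ico_self ht) ht.1

lemma mul_lt (h : IsPainleveIISolution σ T s s') (hσ : 0 < σ) (ht : t ∈ Ioo 0 T) :
    σ * t < s t := by
  have sub_strictMono : StrictMonoOn (fun t ↦ s t - σ * t) (Ico 0 T) :=
    strictMonoOn_of_hasDerivWithinAt_of_interior_pos (convex_Ico 0 T)
      (fun t ht ↦ (h.hasDerivWithinAt t ht).fun_sub ((hasDerivWithinAt_id t _).const_mul σ))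
      fun t ht ↦ by
        rw [interior_Ico] at ht
        linarith [h.lt_deriv hσ ht]
  have := sub_strictMono (left_mem_Ico.2 (ht.1.trans ht.2)) (Ioo_subset_Ico_self ht) ht.1
  simp only [h.apply_zero] at this
  linarith

lemma deriv2_lt (h : IsPainleveIISolution σ T s s') (hσ : 0 < σ) (ht : t ∈ Ioo 0 T) :
    2 * s t ^ 3 + t * s t < 2 * s t ^ 3 + s t ^ 2 / σ := by
  have time_lt : t < s t / σ := (lt_div_iff₀' hσ).2 (h.mul_lt hσ ht)
  calc 2 * s t ^ 3 + t * s t < 2 * s t ^ 3 + s t / σ * s t := by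
        gcongr
        exact h.pos hσ ht
    _ = 2 * s t ^ 3 + s t ^ 2 / σ := by ring

lemma sq_deriv_lt (h : IsPainleveIISolution σ T s s') (hσ : 0 < σ) (ht : t ∈ Ioo 0 T) :
    s' t ^ 2 < s t ^ 4 + σ ^ 2 + 2 * s t ^ 3 / (3 * σ) := by
  have potential_hasDerivAt (u : ℝ) :
      HasDerivAt (fun u ↦ u ^ 4 / 2 + u ^ 3 / (3 * σ)) (2 * u ^ 3 + u ^ 2 / σ) u := by
    refine (((hasDerivAt_pow 4 u).div_const 2).fun_add
      ((hasDerivAt_pow 3 u).div_const (3 * σ))).congr_deriv ?_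
    field_simp
    ring
  have energy_lt := strictMonoOn_potential_sub_kinetic (F := fun u ↦ 2 * u ^ 3 + u ^ 2 / σ)
    (convex_Ico 0 T) h.hasDerivWithinAt h.hasDerivWithinAt_deriv
    (fun t _ ↦ potential_hasDerivAt (s t))
    (fun t ht ↦ h.deriv_pos hσ (interior_subset ht))
    (fun t ht ↦ h.deriv2_lt hσ (interior_Ico (a := (0 : ℝ)) ▸ ht))
    (left_mem_Ico.2 (ht.1.trans ht.2)) (Ioo_subset_Ico_self ht) ht.1
  simp only [h.apply_zero, h.deriv_zero] at energy_lt
  linear_combination 2 * energy_lt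

end IsPainleveIISolution

theorem painleveII_time_gt_integral (σ T : ℝ) (hσ : 0 < σ) (hT : 0 < T) (s s' s'' : ℝ → ℝ)
    (hderiv1 : ∀ t ∈ Ico (0:ℝ) T, HasDerivWithinAt s (s' t) (Ico 0 T) t)
    (hderiv2 : ∀ t ∈ Ico (0:ℝ) T, HasDerivWithinAt s' (s'' t) (Ico 0 T) t)
    (hcont : ContinuousOn s'' (Ico 0 T))
    (hs0 : s 0 = 0) (hs'0 : s' 0 = σ)
    (heq : ∀ t ∈ Ico (0:ℝ) T, s'' t = 2 * s t ^ 3 + t * s t) :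
    ∀ t, 0 < t → t < T →
      (∫ u in (0:ℝ)..(s t), 1 / Real.sqrt (u ^ 4 + σ ^ 2 + 2 * u ^ 3 / (3 * σ))) < t := by
  have h : IsPainleveIISolution σ T s s' :=
    ⟨hderiv1, fun t ht ↦ heq t ht ▸ hderiv2 t ht, hs0, hs'0⟩
  intro t ht htT
  have Icc_sub : Icc 0 t ⊆ Ico 0 T := Icc_subset_Ico_right htT
  have time_lt := integral_one_div_lt_sub_of_deriv_lt
    (v := fun u ↦ √(u ^ 4 + σ ^ 2 + 2 * u ^ 3 / (3 * σ))) ht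
    (fun τ hτ ↦ (hderiv1 τ (Icc_sub hτ)).mono Icc_sub)
    (fun τ hτ ↦ ((hderiv2 τ (Icc_sub hτ)).mono Icc_sub).continuousWithinAt)
    (by fun_prop)
    (fun τ hτ ↦ by
      have := h.nonneg hσ (Icc_sub hτ)
      positivity)
    (fun τ hτ ↦ lt_sqrt_of_sq_lt (h.sq_deriv_lt hσ ⟨hτ.1, hτ.2.trans_lt htT⟩))
  simpa only [hs0, sub_zero] using time_lt
end

section
/- Let σ ≥ √3/2, let T > 1, and let s : ℝ → ℝ be twice continuously differentiable on [0,T) with s(0) = 0, s'(0) = σ, and s''(t) = 2 s(t)³ − t s(t) for all t ∈ [0,T). Then for every t with 1 ≤ t < T one has 2 s(t)² − t > 0 and 4 s(t) s'(t) − 1 > 0. -/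
open Set

/-!
The energy `E = s'² - s⁴ + t s²` of a solution has derivative `s² ≥ 0`, and completing the square
gives `E + (s² - t/2)² = s'² + t²/4`. Starting from `s 0 = 0`, `s' 0 = σ > 0`, this yields
`s' ≥ √(σ² - t²/4)` for `0 ≤ t < 2σ`, and so `s t > t √(σ² - t²/4)` by the mean value theorem.
The right-hand side is at least `√(t/2)` as soon as `σ² ≥ t²/4 + 1/(2t)`; this bound is smallest at
`t = 1`, where it equals `3/4`. Hence at time `1` both `s` and, by the energy identity once more,
`s'` exceed `1/√2`.

From then on the solution cannot return to the parabola: as long as `s'' = s (2s² - t)` stays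
positive, `s'` and `s` increase, so `(2s² - t)' = 4 s s' - 1` stays positive and `2s² - t` increases
as well, which keeps `s''` positive.
-/

theorem forall_mem_Icc_lt_of_forall_Ico_lt {α β : Type*} [ConditionallyCompleteLinearOrder α]
    [TopologicalSpace α] [OrderTopology α] [LinearOrder β] [TopologicalSpace β]
    [OrderClosedTopology β] {f : α → β} {a b : α} {c : β} (hf : ContinuousOn f (Icc a b))
    (hstep : ∀ τ ∈ Icc a b, (∀ t ∈ Ico a τ, c < f t) → c < f τ) :
    ∀ t ∈ Icc a b, c < f t := by
  by_contra! hbad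
  obtain ⟨t, ht, hft⟩ := hbad
  have hcompact : IsCompact (Icc a b ∩ f ⁻¹' Iic c) :=
    isCompact_Icc.of_isClosed_subset (hf.preimage_isClosed_of_isClosed isClosed_Icc isClosed_Iic)
      inter_subset_left
  obtain ⟨τ, ⟨hτ, hfτ⟩, hleast⟩ := hcompact.exists_isLeast ⟨t, ht, hft⟩
  refine (hstep τ hτ fun x hx => ?_).not_ge hfτ
  by_contra! hfx
  exact hx.2.not_ge (hleast ⟨⟨hx.1, hx.2.le.trans hτ.2⟩, hfx⟩)

theorem monotoneOn_of_forall_hasDerivWithinAt_nonneg {f f' : ℝ → ℝ} {D : Set ℝ} (hD : Convex ℝ D)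
    (hf : ∀ t ∈ D, HasDerivWithinAt f (f' t) D t) (hf' : ∀ t ∈ interior D, 0 ≤ f' t) :
    MonotoneOn f D :=
  monotoneOn_of_hasDerivWithinAt_nonneg hD (fun t ht => (hf t ht).continuousWithinAt)
    (fun t ht => (hf t (interior_subset ht)).mono interior_subset) hf'

/-- `s` solves the time-reversed second Painlevé equation `s'' = 2 s³ - t s` on the set `I`. The
derivative `s'` is carried along explicitly, and derivatives are taken within `I`, so that they are
one-sided at endpoints belonging to `I`. -/
structure IsPainleveIINegOn (s s' : ℝ → ℝ) (I : Set ℝ) : Prop where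
  hasDerivWithinAt : ∀ t ∈ I, HasDerivWithinAt s (s' t) I t
  hasDerivWithinAt_deriv : ∀ t ∈ I, HasDerivWithinAt s' (2 * s t ^ 3 - t * s t) I t

namespace IsPainleveIINegOn

/-- The energy `s'² - s⁴ + t s²` of a solution; the explicit time dependence of the equation makes
it nondecreasing rather than conserved. -/
def energy (s s' : ℝ → ℝ) (t : ℝ) : ℝ := s' t ^ 2 - s t ^ 4 + t * s t ^ 2

theorem energy_add_sq (s s' : ℝ → ℝ) (t : ℝ) :
    energy s s' t + (s t ^ 2 - t / 2) ^ 2 = s' t ^ 2 + t ^ 2 / 4 := by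
  unfold energy
  ring

variable {s s' : ℝ → ℝ} {I J : Set ℝ} {a b : ℝ}

theorem mono (h : IsPainleveIINegOn s s' I) (hJI : J ⊆ I) : IsPainleveIINegOn s s' J where
  hasDerivWithinAt t ht := (h.hasDerivWithinAt t (hJI ht)).mono hJI
  hasDerivWithinAt_deriv t ht := (h.hasDerivWithinAt_deriv t (hJI ht)).mono hJI

theorem continuousOn (h : IsPainleveIINegOn s s' I) : ContinuousOn s I :=
  fun t ht => (h.hasDerivWithinAt t ht).continuousWithinAt

theorem continuousOn_deriv (h : IsPainleveIINegOn s s' I) : ContinuousOn s' I :=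
  fun t ht => (h.hasDerivWithinAt_deriv t ht).continuousWithinAt

theorem hasDerivWithinAt_energy (h : IsPainleveIINegOn s s' I) {t : ℝ} (ht : t ∈ I) :
    HasDerivWithinAt (energy s s') (s t ^ 2) I t := by
  have hs := h.hasDerivWithinAt t ht
  have hs' := h.hasDerivWithinAt_deriv t ht
  refine (((hs'.pow 2).sub (hs.pow 4)).add
    ((hasDerivWithinAt_id t I).mul (hs.pow 2))).congr_deriv ?_
  simp only [id_eq, Pi.pow_apply]
  ring

theorem monotoneOn_energy (h : IsPainleveIINegOn s s' I) (hI : Convex ℝ I) :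
    MonotoneOn (energy s s') I :=
  monotoneOn_of_forall_hasDerivWithinAt_nonneg hI (fun _ ht => h.hasDerivWithinAt_energy ht)
    fun _ _ => sq_nonneg _

theorem sq_deriv_zero_le_energy (h : IsPainleveIINegOn s s' (Icc 0 b)) (hb : 0 ≤ b)
    (hs0 : s 0 = 0) : s' 0 ^ 2 ≤ energy s s' b := by
  have hmono := h.monotoneOn_energy (convex_Icc 0 b) (left_mem_Icc.2 hb) (right_mem_Icc.2 hb) hb
  simpa [energy, hs0] using hmono

theorem sq_deriv_zero_sub_le_sq_deriv (h : IsPainleveIINegOn s s' (Icc 0 b)) (hb : 0 ≤ b)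
    (hs0 : s 0 = 0) : s' 0 ^ 2 - b ^ 2 / 4 ≤ s' b ^ 2 := by
  linarith [h.sq_deriv_zero_le_energy hb hs0, energy_add_sq s s' b, sq_nonneg (s b ^ 2 - b / 2)]

theorem deriv_pos (h : IsPainleveIINegOn s s' (Icc 0 b)) (hb : 0 ≤ b) (hs0 : s 0 = 0)
    (hbσ : b < 2 * s' 0) : 0 < s' b := by
  by_contra! hneg
  obtain ⟨x, hx, hx0⟩ : (0 : ℝ) ∈ s' '' Icc 0 b :=
    intermediate_value_Icc' hb h.continuousOn_deriv ⟨hneg, by linarith⟩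
  have hbound : s' 0 ^ 2 - x ^ 2 / 4 ≤ s' x ^ 2 :=
    (h.mono (Icc_subset_Icc_right hx.2)).sq_deriv_zero_sub_le_sq_deriv hx.1 hs0
  have hlt : x ^ 2 < (2 * s' 0) ^ 2 := pow_lt_pow_left₀ (hx.2.trans_lt hbσ) hx.1 two_ne_zero
  rw [hx0] at hbound
  linarith

theorem sqrt_le_deriv (h : IsPainleveIINegOn s s' (Icc 0 b)) (hb : 0 ≤ b) (hs0 : s 0 = 0)
    (hbσ : b < 2 * s' 0) : √(s' 0 ^ 2 - b ^ 2 / 4) ≤ s' b :=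
  Real.sqrt_le_iff.2 ⟨(h.deriv_pos hb hs0 hbσ).le, h.sq_deriv_zero_sub_le_sq_deriv hb hs0⟩

theorem mul_sqrt_lt (h : IsPainleveIINegOn s s' (Icc 0 b)) (hb : 0 < b) (hs0 : s 0 = 0)
    (hbσ : b < 2 * s' 0) : b * √(s' 0 ^ 2 - b ^ 2 / 4) < s b := by
  obtain ⟨x, hx, hslope⟩ := exists_hasDerivAt_eq_slope s s' hb h.continuousOn fun t ht =>
    (h.hasDerivWithinAt t (Ioo_subset_Icc_self ht)).hasDerivAt (Icc_mem_nhds ht.1 ht.2)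
  have hsx : √(s' 0 ^ 2 - x ^ 2 / 4) ≤ s' x :=
    (h.mono (Icc_subset_Icc_right hx.2.le)).sqrt_le_deriv hx.1.le hs0 (hx.2.trans hbσ)
  have hsq : x ^ 2 < b ^ 2 := pow_lt_pow_left₀ hx.2 hx.1.le two_ne_zero
  have hbσ_sq : b ^ 2 < (2 * s' 0) ^ 2 := pow_lt_pow_left₀ hbσ hb.le two_ne_zero
  calc b * √(s' 0 ^ 2 - b ^ 2 / 4)
      < b * √(s' 0 ^ 2 - x ^ 2 / 4) := by
        gcongr
        linarith
    _ ≤ b * s' x := by gcongr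
    _ = s b := by
        rw [hslope, hs0, sub_zero, sub_zero, mul_div_cancel₀ _ hb.ne']

theorem sqrt_half_lt_at_one (h : IsPainleveIINegOn s s' (Icc 0 1)) (hs0 : s 0 = 0)
    (hσ : √3 / 2 ≤ s' 0) : √(1 / 2) < s 1 ∧ √(1 / 2) < s' 1 := by
  have hσ_sq : 3 / 4 ≤ s' 0 ^ 2 := by
    calc (3 / 4 : ℝ) = (√3 / 2) ^ 2 := by
          rw [div_pow, Real.sq_sqrt zero_le_three]
          norm_num
      _ ≤ s' 0 ^ 2 := by gcongr
  have hsqrt_three : 1 < √3 := Real.lt_sqrt_of_sq_lt (by norm_num)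
  have hσ_half : 1 < 2 * s' 0 := by linarith
  have hs1 : √(1 / 2) < s 1 := by
    calc √(1 / 2) ≤ 1 * √(s' 0 ^ 2 - 1 ^ 2 / 4) := by
          rw [one_mul]
          gcongr
          linarith
      _ < s 1 := h.mul_sqrt_lt one_pos hs0 hσ_half
  have hs1_sq : 1 / 2 < s 1 ^ 2 := Real.lt_sq_of_sqrt_lt hs1
  have hgap : 0 < (s 1 ^ 2 - 1 / 2) ^ 2 := pow_pos (sub_pos.2 hs1_sq) 2
  have hs'1_sq : 1 / 2 < s' 1 ^ 2 := by
    linarith [h.sq_deriv_zero_le_energy zero_le_one hs0, energy_add_sq s s' 1]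
  exact ⟨hs1, (Real.sqrt_lt' (h.deriv_pos zero_le_one hs0 hσ_half)).2 hs'1_sq⟩

theorem monotoneOn_deriv (h : IsPainleveIINegOn s s' I) (hI : Convex ℝ I)
    (hs'' : ∀ t ∈ interior I, 0 ≤ s t * (2 * s t ^ 2 - t)) : MonotoneOn s' I :=
  monotoneOn_of_forall_hasDerivWithinAt_nonneg hI h.hasDerivWithinAt_deriv
    fun t ht => by linarith [hs'' t ht]

theorem monotoneOn (h : IsPainleveIINegOn s s' I) (hI : Convex ℝ I)
    (hs' : ∀ t ∈ interior I, 0 ≤ s' t) : MonotoneOn s I :=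
  monotoneOn_of_forall_hasDerivWithinAt_nonneg hI h.hasDerivWithinAt hs'

theorem hasDerivWithinAt_two_mul_sq_sub (h : IsPainleveIINegOn s s' I) {t : ℝ} (ht : t ∈ I) :
    HasDerivWithinAt (fun t => 2 * s t ^ 2 - t) (4 * s t * s' t - 1) I t := by
  refine ((((h.hasDerivWithinAt t ht).pow 2).const_mul 2).sub
    (hasDerivWithinAt_id t I)).congr_deriv ?_
  ring

theorem monotoneOn_two_mul_sq_sub (h : IsPainleveIINegOn s s' I) (hI : Convex ℝ I)
    (hss' : ∀ t ∈ interior I, 1 ≤ 4 * s t * s' t) : MonotoneOn (fun t => 2 * s t ^ 2 - t) I :=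
  monotoneOn_of_forall_hasDerivWithinAt_nonneg hI
    (fun _ ht => h.hasDerivWithinAt_two_mul_sq_sub ht) fun t ht => sub_nonneg.2 (hss' t ht)

theorem left_le_right_of_forall_mul_nonneg (h : IsPainleveIINegOn s s' (Icc a b)) (hab : a ≤ b)
    (hsa : 0 < s a) (hss'a : 1 ≤ 4 * s a * s' a)
    (hs'' : ∀ t ∈ Ioo a b, 0 ≤ s t * (2 * s t ^ 2 - t)) :
    s a ≤ s b ∧ s' a ≤ s' b ∧ 2 * s a ^ 2 - a ≤ 2 * s b ^ 2 - b := by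
  have ha : a ∈ Icc a b := left_mem_Icc.2 hab
  have hb : b ∈ Icc a b := right_mem_Icc.2 hab
  have hconv : Convex ℝ (Icc a b) := convex_Icc a b
  have hs'a : 0 < s' a := pos_of_mul_pos_right (one_pos.trans_le hss'a) (by positivity)
  have hs'_mono : MonotoneOn s' (Icc a b) := h.monotoneOn_deriv hconv (by rwa [interior_Icc])
  have hs'_le : ∀ t ∈ Icc a b, s' a ≤ s' t := fun t ht => hs'_mono ha ht ht.1
  have hs_mono : MonotoneOn s (Icc a b) :=
    h.monotoneOn hconv fun t ht => hs'a.le.trans (hs'_le t (interior_subset ht))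
  have hs_le : ∀ t ∈ Icc a b, s a ≤ s t := fun t ht => hs_mono ha ht ht.1
  have hss' : ∀ t ∈ Icc a b, 1 ≤ 4 * s t * s' t := fun t ht => by
    have hst : 0 < s t := hsa.trans_le (hs_le t ht)
    calc 1 ≤ 4 * s a * s' a := hss'a
      _ ≤ 4 * s t * s' t := by
        gcongr
        exacts [hs_le t ht, hs'_le t ht]
  exact ⟨hs_le b hb, hs'_le b hb,
    h.monotoneOn_two_mul_sq_sub hconv (fun t ht => hss' t (interior_subset ht)) ha hb hab⟩

theorem mul_two_mul_sq_sub_pos (h : IsPainleveIINegOn s s' (Icc a b)) (hsa : 0 < s a)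
    (hss'a : 1 ≤ 4 * s a * s' a) (hgap : 0 < 2 * s a ^ 2 - a) :
    ∀ t ∈ Icc a b, 0 < s t * (2 * s t ^ 2 - t) := by
  have hs := h.continuousOn
  refine forall_mem_Icc_lt_of_forall_Ico_lt (by fun_prop) fun τ hτ hpos => ?_
  obtain ⟨hsτ, -, hgapτ⟩ := (h.mono (Icc_subset_Icc_right hτ.2)).left_le_right_of_forall_mul_nonneg
    hτ.1 hsa hss'a fun t ht => (hpos t (Ioo_subset_Ico_self ht)).le
  exact mul_pos (hsa.trans_le hsτ) (hgap.trans_le hgapτ)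

theorem left_le_right_of_outside_parabola (h : IsPainleveIINegOn s s' (Icc a b)) (hab : a ≤ b)
    (hsa : 0 < s a) (hss'a : 1 ≤ 4 * s a * s' a) (hgap : 0 < 2 * s a ^ 2 - a) :
    s a ≤ s b ∧ s' a ≤ s' b ∧ 2 * s a ^ 2 - a ≤ 2 * s b ^ 2 - b :=
  h.left_le_right_of_forall_mul_nonneg hab hsa hss'a fun t ht =>
    (h.mul_two_mul_sq_sub_pos hsa hss'a hgap t (Ioo_subset_Icc_self ht)).le

end IsPainleveIINegOn

/-- For a solution of `s'' = 2s³ − ts` with `s(0) = 0` and `s'(0) = σ ≥ √3/2`,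
for `1 ≤ t < T` one has `2s(t)² − t > 0` and `4s(t)s'(t) − 1 > 0`. -/
theorem painleveIIneg_outside_parabola (σ T : ℝ) (hσ : Real.sqrt 3 / 2 ≤ σ) (hT : 1 < T)
    (s s' s'' : ℝ → ℝ)
    (hderiv1 : ∀ t ∈ Ico (0:ℝ) T, HasDerivWithinAt s (s' t) (Ico 0 T) t)
    (hderiv2 : ∀ t ∈ Ico (0:ℝ) T, HasDerivWithinAt s' (s'' t) (Ico 0 T) t)
    (hcont : ContinuousOn s'' (Ico 0 T))
    (hs0 : s 0 = 0) (hs'0 : s' 0 = σ)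
    (heq : ∀ t ∈ Ico (0:ℝ) T, s'' t = 2 * s t ^ 3 - t * s t) :
    ∀ t, 1 ≤ t → t < T → 0 < 2 * s t ^ 2 - t ∧ 0 < 4 * s t * s' t - 1 := by
  intro t h1t htT
  have hsol : IsPainleveIINegOn s s' (Ico 0 T) :=
    ⟨hderiv1, fun x hx => heq x hx ▸ hderiv2 x hx⟩
  obtain ⟨hs1, hs'1⟩ :=
    (hsol.mono (Icc_subset_Ico_right hT)).sqrt_half_lt_at_one hs0 (hs'0 ▸ hσ)
  have hs1_pos : 0 < s 1 := (Real.sqrt_nonneg _).trans_lt hs1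
  have hs1_sq : 1 / 2 < s 1 ^ 2 := Real.lt_sq_of_sqrt_lt hs1
  have hss'1 : 1 / 2 < s 1 * s' 1 := by
    calc (1 / 2 : ℝ) = √(1 / 2) * √(1 / 2) := (Real.mul_self_sqrt (by norm_num)).symm
      _ < s 1 * s' 1 := by gcongr
  obtain ⟨hs_le, hs'_le, hgap_le⟩ : s 1 ≤ s t ∧ s' 1 ≤ s' t ∧ 2 * s 1 ^ 2 - 1 ≤ 2 * s t ^ 2 - t :=
    (hsol.mono (Icc_subset_Ico zero_le_one htT)).left_le_right_of_outside_parabola h1t hs1_pos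
      (by linarith) (by linarith)
  have hss'_le : s 1 * s' 1 ≤ s t * s' t :=
    mul_le_mul hs_le hs'_le ((Real.sqrt_nonneg _).trans hs'1.le) (hs1_pos.le.trans hs_le)
  constructor <;> linarith
end
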